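/- Let n, p, r̄, s̄ be positive integers and μ̄ > 0. Suppose c̃ > 0 is a constant with the separation property: for all matrices P' = UΣVᵀ and Q' = LΛRᵀ with U, V, L, R ∈ O_{p,r̄} all μ̄-incoherent and Σ, Λ diagonal with nonnegative entries, one has ‖P'−Q'‖_max² ≤ (c̃ μ̄ r̄⁴ / p)·‖P'−Q'‖_F². Assume s̄ ≤ p/(8 c̃ μ̄ r̄⁴). Let X ∈ ℝ^{n×p} be a design matrix with: (a) ‖XΔ‖_F ≥ σ_min·‖Δ‖_F for every Δ ∈ ℝ^{p×p}, where σ_min > 0; (b) spectral norm ‖X‖ ≤ σ_max; (c) every column of X has Euclidean norm at most B. Let Y = X(L* + S*) + W in ℝ^{n×p}, where L* = U*Σ*V*ᵀ with U*, V* ∈ O_{p,r̄} μ̄-incoherent and Σ* diagonal with nonnegative entries and ‖S*‖₀ ≤ s̄. Suppose (L̂, Ŝ) is feasible, i.e. L̂ = ÛΣ̂V̂ᵀ with Û, V̂ ∈ O_{p,r̄} μ̄-incoherent and Σ̂ diagonal with nonnegative entries, ‖Ŝ‖₀ ≤ s̄, and ‖Y − X(L̂ + Ŝ)‖_F ≤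 ‖Y − X(L* + S*)‖_F. Then ‖L̂ − L*‖_F² + ‖Ŝ − S*‖_F² ≤ (128/σ_min⁴)·( r̄·σ_max²·‖W‖² + s̄·B²·w² ), where ‖W‖ is the spectral norm of W and w is the maximum Euclidean norm of the columns of W. -/

import Mathlib

open Matrix
open scoped BigOperators RealInnerProductSpace

noncomputable def frobNorm {m n : Type*} [Fintype m] [Fintype n] (M : Matrix m n ℝ) : ℝ :=
  Real.sqrt (∑ i, ∑ j, (M i j) ^ 2)

noncomputable def frobInner {m n : Type*} [Fintype m] [Fintype n] (A B : Matrix m n ℝ) : ℝ :=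
  ∑ i, ∑ j, A i j * B i j

noncomputable def maxNorm {m n : Type*} [Fintype m] [Fintype n] (M : Matrix m n ℝ) : ℝ :=
  ⨆ i, ⨆ j, |M i j|

noncomputable def l0Norm {m n : Type*} (M : Matrix m n ℝ) : ℕ :=
  Set.ncard {ij : m × n | M ij.1 ij.2 ≠ 0}

noncomputable def specNorm {p q : ℕ} (M : Matrix (Fin p) (Fin q) ℝ) : ℝ :=
  ‖LinearMap.toContinuousLinearMap (Matrix.toEuclideanLin M)‖

def Incoherent {p r : ℕ} (μ : ℝ) (U : Matrix (Fin p) (Fin r) ℝ) : Prop :=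
  ∀ i, Real.sqrt (∑ j, (U i j) ^ 2) ≤ Real.sqrt (μ * r / p)

def SepProp (p r : ℕ) (μ c : ℝ) : Prop :=
  ∀ (U V L R : Matrix (Fin p) (Fin r) ℝ) (S Lam : Matrix (Fin r) (Fin r) ℝ),
    Uᵀ * U = 1 → Vᵀ * V = 1 → Lᵀ * L = 1 → Rᵀ * R = 1 →
    Incoherent μ U → Incoherent μ V → Incoherent μ L → Incoherent μ R →
    S.IsDiag → (∀ i, 0 ≤ S i i) → Lam.IsDiag → (∀ i, 0 ≤ Lam i i) →
    maxNorm (U * S * Vᵀ - L * Lam * Rᵀ) ^ 2 ≤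
      (c * μ * (r : ℝ) ^ 4 / p) * frobNorm (U * S * Vᵀ - L * Lam * Rᵀ) ^ 2

noncomputable def l1Norm {m n : Type*} [Fintype m] [Fintype n] (M : Matrix m n ℝ) : ℝ :=
  ∑ i, ∑ j, |M i j|

noncomputable def nuclearNorm {p q : ℕ} (M : Matrix (Fin p) (Fin q) ℝ) : ℝ :=
  sSup {x : ℝ | ∃ X : Matrix (Fin p) (Fin q) ℝ, specNorm X ≤ 1 ∧ x = frobInner M X}

noncomputable def Phi {p : ℕ} (lam : ℝ) (Δ : Matrix (Fin p) (Fin p) ℝ) : ℝ :=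
  sInf {x : ℝ | ∃ L S : Matrix (Fin p) (Fin p) ℝ, L + S = Δ ∧ x = nuclearNorm L + lam * l1Norm S}

/-!
Write `D` and `E` for the errors of the low-rank and the sparse part and `G = Xᵀ * W`. Optimality
of the fit gives `‖X (D + E)‖² ≤ 2 ⟨G, D⟩ + 2 ⟨G, E⟩`. The two terms on the right are controlled by
two dualities, `⟨G, D⟩ ≤ √(rank D) ‖G‖ ‖D‖` and `⟨G, E⟩ ≤ √‖E‖₀ ‖G‖_max ‖E‖`. The second one,
applied to `⟨D, E⟩`, turns the separation property into near orthogonality of `D` and `E`: a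
low-rank error is spread over many entries and so correlates little with a sparse one, whence
`‖D + E‖² ≥ (‖D‖² + ‖E‖²) / 2`. The quadratic inequality obtained this way for `(‖D‖, ‖E‖)`, with a
linear right-hand side, bounds both errors.
-/

section Frobenius

variable {l m n : Type*} [Fintype l] [Fintype m] [Fintype n]

theorem frobInner_eq_inner_vec (A B : Matrix m n ℝ) :
    frobInner A B = ⟪WithLp.toLp 2 A.vec, WithLp.toLp 2 B.vec⟫ := by
  simp only [frobInner, PiLp.inner_apply, vec, Fintype.sum_prod_type_right, RCLike.inner_apply,
    conj_trivial, mul_comm]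

theorem frobNorm_eq_norm_vec (M : Matrix m n ℝ) : frobNorm M = ‖WithLp.toLp 2 M.vec‖ := by
  simp only [frobNorm, EuclideanSpace.norm_eq, Real.norm_eq_abs, sq_abs, vec,
    Fintype.sum_prod_type_right]

theorem frobNorm_nonneg (M : Matrix m n ℝ) : 0 ≤ frobNorm M :=
  Real.sqrt_nonneg _

theorem frobNorm_sq (M : Matrix m n ℝ) : frobNorm M ^ 2 = ∑ i, ∑ j, M i j ^ 2 :=
  Real.sq_sqrt (by positivity)

theorem frobNorm_sq_eq_frobInner_self (M : Matrix m n ℝ) : frobNorm M ^ 2 = frobInner M M := by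
  rw [frobNorm_sq]
  simp only [frobInner, sq]

theorem frobNorm_transpose (M : Matrix m n ℝ) : frobNorm Mᵀ = frobNorm M := by
  simp only [frobNorm, transpose_apply]
  rw [Finset.sum_comm]

theorem frobInner_add_right (A B C : Matrix m n ℝ) :
    frobInner A (B + C) = frobInner A B + frobInner A C := by
  simp only [frobInner_eq_inner_vec, vec_add, WithLp.toLp_add, inner_add_right]

theorem frobNorm_add_sq (A B : Matrix m n ℝ) :
    frobNorm (A + B) ^ 2 = frobNorm A ^ 2 + 2 * frobInner A B + frobNorm B ^ 2 := by
  simp only [frobNorm_eq_norm_vec, frobInner_eq_inner_vec, vec_add, WithLp.toLp_add,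
    norm_add_sq_real]

theorem frobNorm_sub_sq (A B : Matrix m n ℝ) :
    frobNorm (A - B) ^ 2 = frobNorm A ^ 2 - 2 * frobInner A B + frobNorm B ^ 2 := by
  simp only [frobNorm_eq_norm_vec, frobInner_eq_inner_vec, vec_sub, WithLp.toLp_sub,
    norm_sub_sq_real]

theorem frobInner_le_frobNorm_mul_frobNorm (A B : Matrix m n ℝ) :
    frobInner A B ≤ frobNorm A * frobNorm B := by
  simpa only [frobNorm_eq_norm_vec, frobInner_eq_inner_vec] using real_inner_le_norm _ _

theorem frobInner_eq_trace (A B : Matrix m n ℝ) : frobInner A B = (Aᵀ * B).trace := by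
  simp only [frobInner, trace, diag, mul_apply, transpose_apply]
  rw [Finset.sum_comm]

theorem frobInner_mul_right (A : Matrix l n ℝ) (X : Matrix l m ℝ) (B : Matrix m n ℝ) :
    frobInner A (X * B) = frobInner (Xᵀ * A) B := by
  rw [frobInner_eq_trace, frobInner_eq_trace, transpose_mul, transpose_transpose, Matrix.mul_assoc]

theorem frobNorm_sq_le_two_mul_frobInner {W Z : Matrix m n ℝ}
    (h : frobNorm (W - Z) ≤ frobNorm W) : frobNorm Z ^ 2 ≤ 2 * frobInner W Z := by
  have hsq := pow_le_pow_left₀ (frobNorm_nonneg _) h 2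
  rw [frobNorm_sub_sq] at hsq
  linarith

end Frobenius

section LowRank

theorem exists_orthonormal_cols_mul_transpose_mul_eq {m n : Type*} [Fintype m] [Fintype n]
    (M : Matrix m n ℝ) :
    ∃ U : Matrix m (Fin M.rank) ℝ, Uᵀ * U = 1 ∧ U * (Uᵀ * M) = M := by
  classical
  let R := LinearMap.range (toEuclideanLin M)
  have hR : Module.finrank ℝ R = M.rank := by
    rw [rank_eq_finrank_range_toLin M (PiLp.basisFun 2 ℝ m) (PiLp.basisFun 2 ℝ n),
      ← toLpLin_eq_toLin]
  let b : OrthonormalBasis (Fin M.rank) ℝ R := (stdOrthonormalBasis ℝ R).reindex (finCongr hR)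
  let U : Matrix m (Fin M.rank) ℝ := of fun i k => (b k : EuclideanSpace ℝ m) i
  refine ⟨U, ?_, ?_⟩
  · ext k l
    have hlk := orthonormal_iff_ite.mp b.orthonormal l k
    simp only [Submodule.coe_inner, PiLp.inner_apply, RCLike.inner_apply, conj_trivial] at hlk
    simp only [U, mul_apply, transpose_apply, of_apply, one_apply, eq_comm (a := k), hlk]
  · ext i j
    have hcol : toEuclideanLin M (EuclideanSpace.single j 1) = WithLp.toLp 2 (M.col j) := by
      ext i
      simp
    have hrepr := congrArg (fun x : R => (x : EuclideanSpace ℝ m) i)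
      (b.sum_repr' ⟨WithLp.toLp 2 (M.col j), _, hcol⟩)
    simp only [Submodule.coe_inner, Submodule.coe_sum, Submodule.coe_smul, PiLp.inner_apply,
      RCLike.inner_apply, conj_trivial, WithLp.ofLp_sum, Finset.sum_apply, WithLp.ofLp_smul,
      Pi.smul_apply, smul_eq_mul, col_apply] at hrepr
    rw [← hrepr]
    simp only [U, mul_apply, transpose_apply, of_apply, mul_comm]

theorem frobNorm_eq_sqrt_of_transpose_mul_self {m k : Type*} [Fintype m] [Fintype k]
    [DecidableEq k] {U : Matrix m k ℝ} (hU : Uᵀ * U = 1) : frobNorm U = √(Fintype.card k) := by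
  rw [← Real.sqrt_sq (frobNorm_nonneg U), frobNorm_sq_eq_frobInner_self, frobInner_eq_trace, hU,
    trace_one]

variable {p q r : ℕ}

open scoped Matrix.Norms.L2Operator in
theorem specNorm_eq_l2OpNorm (M : Matrix (Fin p) (Fin q) ℝ) : specNorm M = ‖M‖ :=
  rfl

theorem specNorm_nonneg (M : Matrix (Fin p) (Fin q) ℝ) : 0 ≤ specNorm M :=
  norm_nonneg _

theorem specNorm_transpose (M : Matrix (Fin p) (Fin q) ℝ) : specNorm Mᵀ = specNorm M := by
  rw [specNorm_eq_l2OpNorm, specNorm_eq_l2OpNorm, ← l2_opNorm_conjTranspose M,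
    conjTranspose_eq_transpose_of_trivial]

theorem specNorm_transpose_mul_le (A : Matrix (Fin p) (Fin q) ℝ) (B : Matrix (Fin p) (Fin r) ℝ) :
    specNorm (Aᵀ * B) ≤ specNorm A * specNorm B := by
  rw [← specNorm_transpose A]
  exact l2_opNorm_mul Aᵀ B

theorem sum_sq_mulVec_le (M : Matrix (Fin p) (Fin q) ℝ) (x : Fin q → ℝ) :
    ∑ i, (M *ᵥ x) i ^ 2 ≤ specNorm M ^ 2 * ∑ i, x i ^ 2 := by
  have h := pow_le_pow_left₀ (norm_nonneg _) (l2_opNorm_mulVec M (WithLp.toLp 2 x)) 2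
  rwa [mul_pow, EuclideanSpace.real_norm_sq_eq, EuclideanSpace.real_norm_sq_eq] at h

theorem frobNorm_mul_le_specNorm_mul_frobNorm (A : Matrix (Fin p) (Fin q) ℝ)
    (B : Matrix (Fin q) (Fin r) ℝ) : frobNorm (A * B) ≤ specNorm A * frobNorm B := by
  refine le_of_sq_le_sq ?_ (mul_nonneg (specNorm_nonneg A) (frobNorm_nonneg B))
  rw [mul_pow, ← frobNorm_transpose, ← frobNorm_transpose B, frobNorm_sq, frobNorm_sq,
    Finset.mul_sum]
  exact Finset.sum_le_sum fun j _ => sum_sq_mulVec_le A fun i => B i j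

theorem frobInner_le_sqrt_rank_mul_specNorm_mul_frobNorm (G D : Matrix (Fin p) (Fin q) ℝ) :
    frobInner G D ≤ √D.rank * specNorm G * frobNorm D := by
  obtain ⟨U, hU, hUD⟩ := exists_orthonormal_cols_mul_transpose_mul_eq D
  have hG : frobNorm (Uᵀ * G) ≤ √D.rank * specNorm G := by
    have h := frobNorm_mul_le_specNorm_mul_frobNorm Gᵀ U
    rwa [specNorm_transpose, frobNorm_eq_sqrt_of_transpose_mul_self hU, Fintype.card_fin,
      ← frobNorm_transpose, transpose_mul, transpose_transpose, mul_comm] at h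
  have hD : frobNorm (Uᵀ * D) = frobNorm D := by
    rw [← sq_eq_sq₀ (frobNorm_nonneg _) (frobNorm_nonneg _), frobNorm_sq_eq_frobInner_self,
      ← frobInner_mul_right, hUD, frobNorm_sq_eq_frobInner_self]
  calc frobInner G D = frobInner (Uᵀ * G) (Uᵀ * D) := by rw [← frobInner_mul_right, hUD]
    _ ≤ frobNorm (Uᵀ * G) * frobNorm (Uᵀ * D) := frobInner_le_frobNorm_mul_frobNorm _ _
    _ ≤ √D.rank * specNorm G * frobNorm D := by
        rw [hD]
        exact mul_le_mul_of_nonneg_right hG (frobNorm_nonneg D)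

theorem rank_mul_sub_mul_le {R m n : Type*} [CommRing R] [StrongRankCondition R] [Fintype n]
    {k l : Type*} [Fintype k] [Fintype l]
    (A : Matrix m k R) (B : Matrix k n R) (C : Matrix m l R) (D : Matrix l n R) :
    (A * B - C * D).rank ≤ Fintype.card k + Fintype.card l := by
  have hfactor : A * B - C * D = fromCols A (-C) * fromRows B D := by
    rw [fromCols_mul_fromRows, Matrix.neg_mul, sub_eq_add_neg]
  rw [hfactor, ← Fintype.card_sum]
  exact (rank_mul_le_left _ _).trans (rank_le_card_width _)

end LowRank

section Sparse

theorem l0Norm_sub_le {m n : Type*} [Finite m] [Finite n] (A B : Matrix m n ℝ) :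
    l0Norm (A - B) ≤ l0Norm A + l0Norm B := by
  refine (Set.ncard_le_ncard ?_ (Set.toFinite _)).trans (Set.ncard_union_le _ _)
  intro ij hij
  by_contra hzero
  simp only [Set.mem_union, Set.mem_ofPred_eq, not_or, not_not] at hzero
  exact hij (by simp [hzero.1, hzero.2])

variable {m n : Type*} [Fintype m] [Fintype n]

theorem abs_apply_le_maxNorm (M : Matrix m n ℝ) (i : m) (j : n) : |M i j| ≤ maxNorm M :=
  (le_ciSup (f := fun j => |M i j|) (Set.finite_range _).bddAbove j).trans
    (le_ciSup (f := fun i => ⨆ j, |M i j|) (Set.finite_range _).bddAbove i)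

theorem maxNorm_nonneg (M : Matrix m n ℝ) : 0 ≤ maxNorm M :=
  Real.iSup_nonneg fun _ => Real.iSup_nonneg fun _ => abs_nonneg _

theorem abs_frobInner_le_maxNorm_mul_l1Norm (A E : Matrix m n ℝ) :
    |frobInner A E| ≤ maxNorm A * l1Norm E := by
  simp only [frobInner, l1Norm, ← Fintype.sum_prod_type', Finset.mul_sum]
  refine (Finset.abs_sum_le_sum_abs _ _).trans (Finset.sum_le_sum fun ij _ => ?_)
  rw [abs_mul]
  exact mul_le_mul_of_nonneg_right (abs_apply_le_maxNorm A _ _) (abs_nonneg _)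

theorem l1Norm_le_sqrt_l0Norm_mul_frobNorm (E : Matrix m n ℝ) :
    l1Norm E ≤ √(l0Norm E) * frobNorm E := by
  classical
  let s : Finset (m × n) := {ij | E ij.1 ij.2 ≠ 0}
  have hcard : l0Norm E = s.card := by
    rw [l0Norm, ← Set.ncard_coe_finset, Finset.coe_filter_univ]
  have hl1 : l1Norm E = ∑ ij ∈ s, |E ij.1 ij.2| := by
    rw [l1Norm, ← Fintype.sum_prod_type', Finset.sum_filter_of_ne fun _ _ => abs_ne_zero.mp]
  have hfrob : ∑ ij ∈ s, |E ij.1 ij.2| ^ 2 ≤ frobNorm E ^ 2 := by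
    simp only [frobNorm_sq, ← Fintype.sum_prod_type' (f := fun i j => E i j ^ 2), sq_abs]
    exact Finset.sum_le_univ_sum_of_nonneg fun _ => sq_nonneg _
  refine le_of_sq_le_sq ?_ (mul_nonneg (Real.sqrt_nonneg _) (frobNorm_nonneg E))
  rw [mul_pow, Real.sq_sqrt (Nat.cast_nonneg _), hl1, hcard]
  exact sq_sum_le_card_mul_sum_sq.trans (mul_le_mul_of_nonneg_left hfrob (Nat.cast_nonneg _))

theorem abs_frobInner_le_sqrt_l0Norm_mul_maxNorm_mul_frobNorm (A E : Matrix m n ℝ) :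
    |frobInner A E| ≤ √(l0Norm E) * maxNorm A * frobNorm E := by
  calc |frobInner A E| ≤ maxNorm A * l1Norm E := abs_frobInner_le_maxNorm_mul_l1Norm A E
    _ ≤ maxNorm A * (√(l0Norm E) * frobNorm E) :=
        mul_le_mul_of_nonneg_left (l1Norm_le_sqrt_l0Norm_mul_frobNorm E) (maxNorm_nonneg A)
    _ = √(l0Norm E) * maxNorm A * frobNorm E := by ring

theorem one_sub_mul_frobNorm_sq_add_le {D E : Matrix m n ℝ} {κ δ : ℝ} (hδ : 0 ≤ δ)
    (hD : maxNorm D ^ 2 ≤ κ * frobNorm D ^ 2) (hE : l0Norm E * κ ≤ δ ^ 2) :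
    (1 - δ) * (frobNorm D ^ 2 + frobNorm E ^ 2) ≤ frobNorm (D + E) ^ 2 := by
  have hmax : √(l0Norm E) * maxNorm D ≤ δ * frobNorm D := by
    refine le_of_sq_le_sq ?_ (mul_nonneg hδ (frobNorm_nonneg D))
    calc (√(l0Norm E) * maxNorm D) ^ 2 = l0Norm E * maxNorm D ^ 2 := by
          rw [mul_pow, Real.sq_sqrt (Nat.cast_nonneg _)]
      _ ≤ l0Norm E * (κ * frobNorm D ^ 2) := by gcongr
      _ = l0Norm E * κ * frobNorm D ^ 2 := by ring
      _ ≤ δ ^ 2 * frobNorm D ^ 2 := by gcongr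
      _ = (δ * frobNorm D) ^ 2 := by ring
  have hinner : |frobInner D E| ≤ δ * (frobNorm D * frobNorm E) := by
    rw [← mul_assoc]
    exact (abs_frobInner_le_sqrt_l0Norm_mul_maxNorm_mul_frobNorm D E).trans
      (mul_le_mul_of_nonneg_right hmax (frobNorm_nonneg E))
  have hcross : 2 * (δ * (frobNorm D * frobNorm E)) ≤
      δ * (frobNorm D ^ 2 + frobNorm E ^ 2) := by
    linarith [mul_le_mul_of_nonneg_left (two_mul_le_add_sq (frobNorm D) (frobNorm E)) hδ]
  rw [frobNorm_add_sq]
  linarith [(abs_le.mp hinner).1]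

end Sparse

section ColumnNorm

/-- The largest Euclidean norm of a column of `M`, which is the quantity `w` of the error bound;
as a real supremum it is `0` when `M` has no columns. -/
noncomputable def maxColNorm {m n : Type*} [Fintype m] (M : Matrix m n ℝ) : ℝ :=
  ⨆ j, √(∑ i, M i j ^ 2)

theorem maxColNorm_nonneg {m n : Type*} [Fintype m] (M : Matrix m n ℝ) : 0 ≤ maxColNorm M :=
  Real.iSup_nonneg fun _ => Real.sqrt_nonneg _

theorem sqrt_sum_sq_le_maxColNorm {m n : Type*} [Fintype m] [Finite n] (M : Matrix m n ℝ) (j : n) :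
    √(∑ i, M i j ^ 2) ≤ maxColNorm M :=
  le_ciSup (f := fun j => √(∑ i, M i j ^ 2)) (Set.finite_range _).bddAbove j

theorem maxNorm_transpose_mul_le {l m n : Type*} [Fintype l] [Fintype m] [Fintype n]
    (X : Matrix l m ℝ) (W : Matrix l n ℝ) : maxNorm (Xᵀ * W) ≤ maxColNorm X * maxColNorm W := by
  have hnonneg := mul_nonneg (maxColNorm_nonneg X) (maxColNorm_nonneg W)
  refine Real.iSup_le (fun i => Real.iSup_le (fun j => ?_) hnonneg) hnonneg
  calc |(Xᵀ * W) i j| ≤ √((∑ k, X k i ^ 2) * ∑ k, W k j ^ 2) :=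
        Real.abs_le_sqrt (Finset.sum_mul_sq_le_sq_mul_sq _ _ _)
    _ = √(∑ k, X k i ^ 2) * √(∑ k, W k j ^ 2) := Real.sqrt_mul (by positivity) _
    _ ≤ maxColNorm X * maxColNorm W :=
        mul_le_mul (sqrt_sum_sq_le_maxColNorm X i) (sqrt_sum_sq_le_maxColNorm W j)
          (Real.sqrt_nonneg _) (maxColNorm_nonneg X)

end ColumnNorm

section IncoherentSVD

/-- `L` is of the form `U * S * Vᵀ` with `U`, `V` incoherent with orthonormal columns and `S`
diagonal with nonnegative entries: the class of low-rank matrices to which both the true and the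
estimated low-rank parts belong. Since the entries of `S` may vanish, `r` bounds the rank. -/
def HasIncoherentSVD {p : ℕ} (r : ℕ) (μ : ℝ) (L : Matrix (Fin p) (Fin p) ℝ) : Prop :=
  ∃ (U V : Matrix (Fin p) (Fin r) ℝ) (S : Matrix (Fin r) (Fin r) ℝ),
    (Uᵀ * U = 1 ∧ Vᵀ * V = 1) ∧ (Incoherent μ U ∧ Incoherent μ V) ∧
      (S.IsDiag ∧ ∀ i, 0 ≤ S i i) ∧ L = U * S * Vᵀ

variable {p r : ℕ} {μ c : ℝ} {L M E : Matrix (Fin p) (Fin p) ℝ}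

theorem HasIncoherentSVD.rank_sub_le (hL : HasIncoherentSVD r μ L) (hM : HasIncoherentSVD r μ M) :
    (L - M).rank ≤ 2 * r := by
  obtain ⟨U, V, S, -, -, -, rfl⟩ := hL
  obtain ⟨U', V', S', -, -, -, rfl⟩ := hM
  simpa only [Fintype.card_fin, two_mul] using rank_mul_sub_mul_le (U * S) Vᵀ (U' * S') V'ᵀ

theorem SepProp.maxNorm_sub_sq_le (hsep : SepProp p r μ c) (hL : HasIncoherentSVD r μ L)
    (hM : HasIncoherentSVD r μ M) :
    maxNorm (L - M) ^ 2 ≤ (c * μ * (r : ℝ) ^ 4 / p) * frobNorm (L - M) ^ 2 := by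
  obtain ⟨U, V, S, ⟨hU, hV⟩, ⟨hUμ, hVμ⟩, ⟨hS, hS0⟩, rfl⟩ := hL
  obtain ⟨U', V', S', ⟨hU', hV'⟩, ⟨hUμ', hVμ'⟩, ⟨hS', hS0'⟩, rfl⟩ := hM
  exact hsep U V U' V' S S' hU hV hU' hV' hUμ hVμ hUμ' hVμ' hS hS0 hS' hS0'

theorem SepProp.half_mul_frobNorm_sq_add_le (hsep : SepProp p r μ c) (hμ : 0 ≤ μ) (hc : 0 ≤ c)
    (hL : HasIncoherentSVD r μ L) (hM : HasIncoherentSVD r μ M)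
    (hE : (l0Norm E : ℝ) ≤ p / (4 * c * μ * (r : ℝ) ^ 4)) :
    1 / 2 * (frobNorm (L - M) ^ 2 + frobNorm E ^ 2) ≤ frobNorm (L - M + E) ^ 2 := by
  have hsmall : l0Norm E * (c * μ * (r : ℝ) ^ 4 / p) ≤ (1 / 2) ^ 2 :=
    calc _ ≤ p / (4 * c * μ * (r : ℝ) ^ 4) * (c * μ * (r : ℝ) ^ 4 / p) := by gcongr
      _ = 1 / 4 * (p / (c * μ * (r : ℝ) ^ 4) * (p / (c * μ * (r : ℝ) ^ 4))⁻¹) := by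
          rw [inv_div]
          ring
      _ ≤ (1 / 2) ^ 2 := by linarith [mul_inv_le_one (a := p / (c * μ * (r : ℝ) ^ 4))]
  convert one_sub_mul_frobNorm_sq_add_le (by norm_num) (hsep.maxNorm_sub_sq_le hL hM) hsmall using 2
  norm_num

end IncoherentSVD

section ErrorBound

theorem sq_add_sq_le_div_sq_of_mul_le {κ a b α β : ℝ} (hκ : 0 < κ)
    (h : κ * (a ^ 2 + b ^ 2) ≤ α * a + β * b) : a ^ 2 + b ^ 2 ≤ (α ^ 2 + β ^ 2) / κ ^ 2 := by
  rw [le_div_iff₀ (by positivity)]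
  nlinarith [sq_nonneg (κ * a - α), sq_nonneg (κ * b - β), mul_le_mul_of_nonneg_left h hκ.le]

theorem frobNorm_sq_add_frobNorm_sq_le {n p q k s : ℕ} {X : Matrix (Fin n) (Fin p) ℝ}
    {W : Matrix (Fin n) (Fin q) ℝ} {D E : Matrix (Fin p) (Fin q) ℝ} {σ κ g t : ℝ}
    (hσ : 0 < σ) (hκ : 0 < κ)
    (hX : σ * frobNorm (D + E) ≤ frobNorm (X * (D + E)))
    (hDE : κ * (frobNorm D ^ 2 + frobNorm E ^ 2) ≤ frobNorm (D + E) ^ 2)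
    (hfit : frobNorm (W - X * (D + E)) ≤ frobNorm W)
    (hD : D.rank ≤ k) (hE : l0Norm E ≤ s)
    (hspec : specNorm (Xᵀ * W) ≤ g) (hmax : maxNorm (Xᵀ * W) ≤ t) :
    frobNorm D ^ 2 + frobNorm E ^ 2 ≤ (k * g ^ 2 + s * t ^ 2) / (σ ^ 2 * κ / 2) ^ 2 := by
  set G := Xᵀ * W
  have hquad : σ ^ 2 * κ / 2 * (frobNorm D ^ 2 + frobNorm E ^ 2) ≤
      √D.rank * specNorm G * frobNorm D + √(l0Norm E) * maxNorm G * frobNorm E := by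
    have hlower : σ ^ 2 * (κ * (frobNorm D ^ 2 + frobNorm E ^ 2)) ≤
        frobNorm (X * (D + E)) ^ 2 :=
      calc _ ≤ σ ^ 2 * frobNorm (D + E) ^ 2 := by gcongr
        _ = (σ * frobNorm (D + E)) ^ 2 := by ring
        _ ≤ frobNorm (X * (D + E)) ^ 2 :=
            pow_le_pow_left₀ (mul_nonneg hσ.le (frobNorm_nonneg _)) hX 2
    have hupper : frobNorm (X * (D + E)) ^ 2 ≤ 2 * (frobInner G D + frobInner G E) := by
      rw [← frobInner_add_right, ← frobInner_mul_right]
      exact frobNorm_sq_le_two_mul_frobInner hfit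
    have hlowRank := frobInner_le_sqrt_rank_mul_specNorm_mul_frobNorm G D
    have hsparse := (le_abs_self _).trans
      (abs_frobInner_le_sqrt_l0Norm_mul_maxNorm_mul_frobNorm G E)
    linarith
  have hG := specNorm_nonneg G
  have hG' := maxNorm_nonneg G
  calc _ ≤ ((√D.rank * specNorm G) ^ 2 + (√(l0Norm E) * maxNorm G) ^ 2) / (σ ^ 2 * κ / 2) ^ 2 :=
        sq_add_sq_le_div_sq_of_mul_le (by positivity) hquad
    _ = (D.rank * specNorm G ^ 2 + l0Norm E * maxNorm G ^ 2) / (σ ^ 2 * κ / 2) ^ 2 := by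
        simp only [mul_pow, Real.sq_sqrt (Nat.cast_nonneg _)]
    _ ≤ (k * g ^ 2 + s * t ^ 2) / (σ ^ 2 * κ / 2) ^ 2 := by gcongr

end ErrorBound

/-- deterministic error bound for multitask regression with a
low-rank-plus-sparse coefficient matrix. -/
theorem stmt2
    (n p rbar sbar : ℕ) (hn : 0 < n) (hp : 0 < p) (hrbar : 0 < rbar) (hsbar : 0 < sbar)
    (μbar c : ℝ) (hμbar : 0 < μbar) (hc : 0 < c) (hsep : SepProp p rbar μbar c)
    (hsparse : (sbar : ℝ) ≤ (p : ℝ) / (8 * c * μbar * (rbar : ℝ) ^ 4))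
    (X : Matrix (Fin n) (Fin p) ℝ)
    (σmin σmax B : ℝ) (hσmin : 0 < σmin)
    (hXlow : ∀ Δ : Matrix (Fin p) (Fin p) ℝ, σmin * frobNorm Δ ≤ frobNorm (X * Δ))
    (hXspec : specNorm X ≤ σmax)
    (hXcol : ∀ j, Real.sqrt (∑ i, (X i j) ^ 2) ≤ B)
    (Y W : Matrix (Fin n) (Fin p) ℝ)
    (Lstar Sstar Lhat Shat : Matrix (Fin p) (Fin p) ℝ)
    (Ustar Vstar Uhat Vhat : Matrix (Fin p) (Fin rbar) ℝ)
    (Sigstar Sighat : Matrix (Fin rbar) (Fin rbar) ℝ)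
    (hY : Y = X * (Lstar + Sstar) + W)
    (hUo : Ustarᵀ * Ustar = 1) (hVo : Vstarᵀ * Vstar = 1)
    (hUi : Incoherent μbar Ustar) (hVi : Incoherent μbar Vstar)
    (hSigd : Sigstar.IsDiag) (hSignn : ∀ i, 0 ≤ Sigstar i i)
    (hLstar : Lstar = Ustar * Sigstar * Vstarᵀ)
    (hSstar : l0Norm Sstar ≤ sbar)
    (hUho : Uhatᵀ * Uhat = 1) (hVho : Vhatᵀ * Vhat = 1)
    (hUhi : Incoherent μbar Uhat) (hVhi : Incoherent μbar Vhat)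
    (hSighd : Sighat.IsDiag) (hSighnn : ∀ i, 0 ≤ Sighat i i)
    (hLhat : Lhat = Uhat * Sighat * Vhatᵀ)
    (hShat : l0Norm Shat ≤ sbar)
    (hopt : frobNorm (Y - X * (Lhat + Shat)) ≤ frobNorm (Y - X * (Lstar + Sstar))) :
    frobNorm (Lhat - Lstar) ^ 2 + frobNorm (Shat - Sstar) ^ 2 ≤
      (128 / σmin ^ 4) *
        ((rbar : ℝ) * σmax ^ 2 * specNorm W ^ 2 +
          (sbar : ℝ) * B ^ 2 * (⨆ j, Real.sqrt (∑ i, (W i j) ^ 2)) ^ 2) := by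
  have hLh : HasIncoherentSVD rbar μbar Lhat :=
    ⟨Uhat, Vhat, Sighat, ⟨hUho, hVho⟩, ⟨hUhi, hVhi⟩, ⟨hSighd, hSighnn⟩, hLhat⟩
  have hLs : HasIncoherentSVD rbar μbar Lstar :=
    ⟨Ustar, Vstar, Sigstar, ⟨hUo, hVo⟩, ⟨hUi, hVi⟩, ⟨hSigd, hSignn⟩, hLstar⟩
  have hl0 : l0Norm (Shat - Sstar) ≤ 2 * sbar := (l0Norm_sub_le Shat Sstar).trans (by omega)
  have hDE := hsep.half_mul_frobNorm_sq_add_le hμbar.le hc.le hLh hLs (E := Shat - Sstar) <|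
    calc (l0Norm (Shat - Sstar) : ℝ) ≤ 2 * sbar := by exact_mod_cast hl0
      _ ≤ 2 * (p / (8 * c * μbar * (rbar : ℝ) ^ 4)) := by gcongr
      _ = p / (4 * c * μbar * (rbar : ℝ) ^ 4) := by ring
  have hfit : frobNorm (W - X * (Lhat - Lstar + (Shat - Sstar))) ≤ frobNorm W := by
    convert hopt using 2 <;> rw [hY] <;> simp only [Matrix.mul_add, Matrix.mul_sub] <;> abel
  have hspec := (specNorm_transpose_mul_le X W).trans
    (mul_le_mul_of_nonneg_right hXspec (specNorm_nonneg W))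
  have : Nonempty (Fin p) := ⟨0, hp⟩
  have hmax := (maxNorm_transpose_mul_le X W).trans
    (mul_le_mul_of_nonneg_right (ciSup_le hXcol) (maxColNorm_nonneg W))
  calc _ ≤ _ := frobNorm_sq_add_frobNorm_sq_le hσmin one_half_pos (hXlow _) hDE hfit
        (hLh.rank_sub_le hLs) hl0 hspec hmax
    _ = 32 / σmin ^ 4 *
        (rbar * σmax ^ 2 * specNorm W ^ 2 + sbar * B ^ 2 * maxColNorm W ^ 2) := by
      push_cast
      field_simp
      ring
    _ ≤ _ := mul_le_mul_of_nonneg_right (by gcongr; norm_num) (by positivity)
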